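/- Let Λ := R, Γ ⊢ Δ be a labelled sequent for first-order intuitionistic logics. If R, w ≤ u, Γ ⊢ Δ is derivable in G3IntQ (respectively, in G3IntQC) and there is a (possibly empty) propagation path π(w,u) in the propagation graph of Λ with s_π(w,u) ∈ L_{S4}(a), then R, Γ ⊢ Δ is derivable in G3IntQ (respectively, in G3IntQC). -/

import Mathlib

/-!
Labelled sequent calculi for first-order intuitionistic logics.
-/

namespace IntFOL

/-- Terms: parameters and (de Bruijn) bound variables. -/
inductive ITerm : Type
  | param : ℕ → ITerm
  | bvar : ℕ → ITerm

/-- First-order formulae built from atomic formulae and `⊥` by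
`∧`, `∨`, `⊃`, `∃`, `∀` (quantifiers in de Bruijn style). -/
inductive IFml : Type
  | atom : ℕ → List ITerm → IFml
  | bot : IFml
  | and : IFml → IFml → IFml
  | or : IFml → IFml → IFml
  | imp : IFml → IFml → IFml
  | all : IFml → IFml
  | ex : IFml → IFml

/-- Instantiate the bound variable of index `d` by the parameter `a` in a term. -/
def instT (a d : ℕ) : ITerm → ITerm
  | ITerm.param b => ITerm.param b
  | ITerm.bvar m => if m = d then ITerm.param a else ITerm.bvar m

/-- Instantiate the bound variable of index `d` by the parameter `a`. -/
def instF (a : ℕ) : ℕ → IFml → IFml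
  | d, IFml.atom P ts => IFml.atom P (ts.map (instT a d))
  | _, IFml.bot => IFml.bot
  | d, IFml.and φ ψ => IFml.and (instF a d φ) (instF a d ψ)
  | d, IFml.or φ ψ => IFml.or (instF a d φ) (instF a d ψ)
  | d, IFml.imp φ ψ => IFml.imp (instF a d φ) (instF a d ψ)
  | d, IFml.all φ => IFml.all (instF a (d + 1) φ)
  | d, IFml.ex φ => IFml.ex (instF a (d + 1) φ)

/-- `open0 φ a` is the substitution `φ(a/x)` of the parameter `a` for the
variable bound by the outermost (removed) quantifier. -/
def open0 (φ : IFml) (a : ℕ) : IFml := instF a 0 φ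

/-- The parameter `a` occurs in a term. -/
def pT (a : ℕ) : ITerm → Prop
  | ITerm.param b => b = a
  | ITerm.bvar _ => False

/-- The parameter `a` occurs in a formula. -/
def pF (a : ℕ) : IFml → Prop
  | IFml.atom _ ts => ∃ t ∈ ts, pT a t
  | IFml.bot => False
  | IFml.and φ ψ => pF a φ ∨ pF a ψ
  | IFml.or φ ψ => pF a φ ∨ pF a ψ
  | IFml.imp φ ψ => pF a φ ∨ pF a ψ
  | IFml.all φ => pF a φ
  | IFml.ex φ => pF a φ

/-- All bound-variable indices of a term are below `k`. -/
def lcT (k : ℕ) : ITerm → Prop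
  | ITerm.param _ => True
  | ITerm.bvar m => m < k

/-- All free bound-variable indices of a formula are below `k`;
`lcF 0 φ` says that `φ` has no free (bound) variables. -/
def lcF : ℕ → IFml → Prop
  | k, IFml.atom _ ts => ∀ t ∈ ts, lcT k t
  | _, IFml.bot => True
  | k, IFml.and φ ψ => lcF k φ ∧ lcF k ψ
  | k, IFml.or φ ψ => lcF k φ ∧ lcF k ψ
  | k, IFml.imp φ ψ => lcF k φ ∧ lcF k ψ
  | k, IFml.all φ => lcF (k + 1) φ
  | k, IFml.ex φ => lcF (k + 1) φ

/-- Multisets of labelled formulae `w : φ`. -/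
abbrev LSeq : Type := Multiset (ℕ × IFml)

/-- Edges of the propagation graph determined by the relational atoms `w ≤ u`:
`true` encodes the character `a` (a forward move) and `false` its converse `ā`. -/
def IEdge (Rle : Multiset (ℕ × ℕ)) (w u : ℕ) (c : Bool) : Prop :=
  if c then (w, u) ∈ Rle else (u, w) ∈ Rle

/-- Propagation paths in the propagation graph, with their strings. -/
inductive BPath (Rle : Multiset (ℕ × ℕ)) : ℕ → ℕ → List Bool → Prop
  | nil (w : ℕ) : BPath Rle w w []
  | cons {w u v : ℕ} {c : Bool} {s : List Bool} :
      IEdge Rle w u c → BPath Rle u v s → BPath Rle w v (c :: s)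

/-- One-step rewriting for string rewriting systems over the alphabet `{a, ā}`. -/
def OneStepB (P : Set (Bool × List Bool)) (s t : List Bool) : Prop :=
  ∃ u v x r, (x, r) ∈ P ∧ s = u ++ x :: v ∧ t = u ++ r ++ v

/-- `LangB P x s` iff `x →*_P s`. -/
def LangB (P : Set (Bool × List Bool)) (x : Bool) (s : List Bool) : Prop :=
  Relation.ReflTransGen (OneStepB P) [x] s

/-- The system `S4 := {a → ε, a → a·a, ā → ε, ā → ā·ā}`
(`true` is `a`, `false` is `ā`). -/
def S4sys : Set (Bool × List Bool) :=
  {(true, []), (true, [true, true]), (false, []), (false, [false, false])}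

/-- The system `S5 := {a → ε, a → ā·a, ā → ε, ā → a·ā}`. -/
def S5sys : Set (Bool × List Bool) :=
  {(true, []), (true, [false, true]), (false, []), (false, [true, false])}

/-- There is a propagation path `π(w,u)` with `s_π(w,u) ∈ L_{S4}(a)`. -/
def Cond4 (Rle : Multiset (ℕ × ℕ)) (w u : ℕ) : Prop :=
  ∃ s, BPath Rle w u s ∧ LangB S4sys true s

/-- There is a propagation path `π(w,u)` with `s_π(w,u) ∈ L_{S5}(a)`. -/
def Cond5 (Rle : Multiset (ℕ × ℕ)) (w u : ℕ) : Prop :=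
  ∃ s, BPath Rle w u s ∧ LangB S5sys true s

/-- `Cond4` for the non-constant domain case (`cd = false`), `Cond5` for the
constant domain case (`cd = true`). -/
def CondD (cd : Bool) (Rle : Multiset (ℕ × ℕ)) (w u : ℕ) : Prop :=
  if cd then Cond5 Rle w u else Cond4 Rle w u

/-- The label `v` occurs in the labelled sequent `R, Γ ⊢ Δ` (where the
antecedent `R` consists of the relational atoms `Rle` and domain atoms `Dom`,
a domain atom `a ∈ D_w` being encoded as the pair `(a, w)`). -/
def loccurs (v : ℕ) (Rle Dom : Multiset (ℕ × ℕ)) (Γ Δ : LSeq) : Prop :=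
  (∃ w u, (w, u) ∈ Rle ∧ (v = w ∨ v = u)) ∨ (∃ a, (a, v) ∈ Dom) ∨
    (∃ φ, (v, φ) ∈ Γ) ∨ ∃ φ, (v, φ) ∈ Δ

/-- The parameter `a` occurs in the labelled sequent. -/
def poccurs (a : ℕ) (Dom : Multiset (ℕ × ℕ)) (Γ Δ : LSeq) : Prop :=
  (∃ w, (a, w) ∈ Dom) ∨ (∃ w φ, (w, φ) ∈ Γ ∧ pF a φ) ∨ ∃ w φ, (w, φ) ∈ Δ ∧ pF a φ

/-- Gated labelled sequent calculi for first-order intuitionistic logics.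
Sequents are `Rle, Dom, Γ ⊢ Δ`.  The rules `(⊥l)`, `(∧l)`, `(∧r)`, `(∨l)`,
`(∨r)`, `(⊃r)`, `(∃l)`, `(∀r)` are always present; the rules `(id)`, `(⊃l)`,
`(∃r)`, `(∀l)` of `G3IntQ` are present exactly when `gOld` holds; the structural
rules `(ref)`, `(tra)`, `(nd)`, `(ned)` — and, when `cd = true`, `(cd)` — are
present exactly when `gStr` holds; and the rules `(id^X)`, `(Pr_⊃)`, `(∃r1^X)`,
`(∃r2^X)`, `(∀l1^X)`, `(∀l2^X)` of `R(Q)` (for `cd = false`) or `R(QC)` (for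
`cd = true`) are present exactly when `gNew` holds.  In particular
`IDer false True True False` is `G3IntQ`, `IDer true True True False` is
`G3IntQC`, `IDer false False False True` is `IntQL*` and
`IDer true False False True` is `IntQCL*`. -/
inductive IDer (cd : Bool) (gOld gStr gNew : Prop) :
    Multiset (ℕ × ℕ) → Multiset (ℕ × ℕ) → LSeq → LSeq → Prop
  | botl (Rle Dom : Multiset (ℕ × ℕ)) (Γ Δ : LSeq) (w : ℕ) :
      IDer cd gOld gStr gNew Rle Dom ((w, IFml.bot) ::ₘ Γ) Δ
  | andl {Rle Dom : Multiset (ℕ × ℕ)} {Γ Δ : LSeq} {w : ℕ} {φ ψ : IFml} :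
      IDer cd gOld gStr gNew Rle Dom ((w, φ) ::ₘ (w, ψ) ::ₘ Γ) Δ →
      IDer cd gOld gStr gNew Rle Dom ((w, IFml.and φ ψ) ::ₘ Γ) Δ
  | andr {Rle Dom : Multiset (ℕ × ℕ)} {Γ Δ : LSeq} {w : ℕ} {φ ψ : IFml} :
      IDer cd gOld gStr gNew Rle Dom Γ ((w, φ) ::ₘ Δ) →
      IDer cd gOld gStr gNew Rle Dom Γ ((w, ψ) ::ₘ Δ) →
      IDer cd gOld gStr gNew Rle Dom Γ ((w, IFml.and φ ψ) ::ₘ Δ)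
  | orl {Rle Dom : Multiset (ℕ × ℕ)} {Γ Δ : LSeq} {w : ℕ} {φ ψ : IFml} :
      IDer cd gOld gStr gNew Rle Dom ((w, φ) ::ₘ Γ) Δ →
      IDer cd gOld gStr gNew Rle Dom ((w, ψ) ::ₘ Γ) Δ →
      IDer cd gOld gStr gNew Rle Dom ((w, IFml.or φ ψ) ::ₘ Γ) Δ
  | orr {Rle Dom : Multiset (ℕ × ℕ)} {Γ Δ : LSeq} {w : ℕ} {φ ψ : IFml} :
      IDer cd gOld gStr gNew Rle Dom Γ ((w, φ) ::ₘ (w, ψ) ::ₘ Δ) →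
      IDer cd gOld gStr gNew Rle Dom Γ ((w, IFml.or φ ψ) ::ₘ Δ)
  | impr {Rle Dom : Multiset (ℕ × ℕ)} {Γ Δ : LSeq} {w u : ℕ} {φ ψ : IFml} :
      ¬ loccurs u Rle Dom Γ ((w, IFml.imp φ ψ) ::ₘ Δ) →
      IDer cd gOld gStr gNew ((w, u) ::ₘ Rle) Dom ((u, φ) ::ₘ Γ) ((u, ψ) ::ₘ Δ) →
      IDer cd gOld gStr gNew Rle Dom Γ ((w, IFml.imp φ ψ) ::ₘ Δ)
  | exl {Rle Dom : Multiset (ℕ × ℕ)} {Γ Δ : LSeq} {w a : ℕ} {φ : IFml} :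
      ¬ poccurs a Dom ((w, IFml.ex φ) ::ₘ Γ) Δ →
      IDer cd gOld gStr gNew Rle ((a, w) ::ₘ Dom) ((w, open0 φ a) ::ₘ Γ) Δ →
      IDer cd gOld gStr gNew Rle Dom ((w, IFml.ex φ) ::ₘ Γ) Δ
  | allr {Rle Dom : Multiset (ℕ × ℕ)} {Γ Δ : LSeq} {w u a : ℕ} {φ : IFml} :
      ¬ loccurs u Rle Dom Γ ((w, IFml.all φ) ::ₘ Δ) →
      ¬ poccurs a Dom Γ ((w, IFml.all φ) ::ₘ Δ) →
      IDer cd gOld gStr gNew ((w, u) ::ₘ Rle) ((a, u) ::ₘ Dom) Γ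
        ((u, open0 φ a) ::ₘ Δ) →
      IDer cd gOld gStr gNew Rle Dom Γ ((w, IFml.all φ) ::ₘ Δ)
  | id (h : gOld) {Rle Dom : Multiset (ℕ × ℕ)} {Γ Δ : LSeq} (w u P : ℕ)
      (as : List ℕ) :
      IDer cd gOld gStr gNew ((w, u) ::ₘ Rle)
        ((↑(as.map fun a => (a, w)) : Multiset (ℕ × ℕ)) + Dom)
        ((w, IFml.atom P (as.map ITerm.param)) ::ₘ Γ)
        ((u, IFml.atom P (as.map ITerm.param)) ::ₘ Δ)
  | impl (h : gOld) {Rle Dom : Multiset (ℕ × ℕ)} {Γ Δ : LSeq} {w u : ℕ}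
      {φ ψ : IFml} :
      IDer cd gOld gStr gNew ((w, u) ::ₘ Rle) Dom ((w, IFml.imp φ ψ) ::ₘ Γ)
        ((u, φ) ::ₘ Δ) →
      IDer cd gOld gStr gNew ((w, u) ::ₘ Rle) Dom
        ((w, IFml.imp φ ψ) ::ₘ (u, ψ) ::ₘ Γ) Δ →
      IDer cd gOld gStr gNew ((w, u) ::ₘ Rle) Dom ((w, IFml.imp φ ψ) ::ₘ Γ) Δ
  | exr (h : gOld) {Rle Dom : Multiset (ℕ × ℕ)} {Γ Δ : LSeq} {w a : ℕ}
      {φ : IFml} :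
      IDer cd gOld gStr gNew Rle ((a, w) ::ₘ Dom) Γ
        ((w, open0 φ a) ::ₘ (w, IFml.ex φ) ::ₘ Δ) →
      IDer cd gOld gStr gNew Rle ((a, w) ::ₘ Dom) Γ ((w, IFml.ex φ) ::ₘ Δ)
  | alll (h : gOld) {Rle Dom : Multiset (ℕ × ℕ)} {Γ Δ : LSeq} {w u a : ℕ}
      {φ : IFml} :
      IDer cd gOld gStr gNew ((w, u) ::ₘ Rle) ((a, u) ::ₘ Dom)
        ((u, open0 φ a) ::ₘ (w, IFml.all φ) ::ₘ Γ) Δ →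
      IDer cd gOld gStr gNew ((w, u) ::ₘ Rle) ((a, u) ::ₘ Dom)
        ((w, IFml.all φ) ::ₘ Γ) Δ
  | ref (h : gStr) {Rle Dom : Multiset (ℕ × ℕ)} {Γ Δ : LSeq} {w : ℕ} :
      IDer cd gOld gStr gNew ((w, w) ::ₘ Rle) Dom Γ Δ →
      IDer cd gOld gStr gNew Rle Dom Γ Δ
  | tra (h : gStr) {Rle Dom : Multiset (ℕ × ℕ)} {Γ Δ : LSeq} {w u v : ℕ} :
      IDer cd gOld gStr gNew ((w, u) ::ₘ (u, v) ::ₘ (w, v) ::ₘ Rle) Dom Γ Δ →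
      IDer cd gOld gStr gNew ((w, u) ::ₘ (u, v) ::ₘ Rle) Dom Γ Δ
  | nd (h : gStr) {Rle Dom : Multiset (ℕ × ℕ)} {Γ Δ : LSeq} {v w a : ℕ} :
      IDer cd gOld gStr gNew ((v, w) ::ₘ Rle) ((a, v) ::ₘ (a, w) ::ₘ Dom) Γ Δ →
      IDer cd gOld gStr gNew ((v, w) ::ₘ Rle) ((a, v) ::ₘ Dom) Γ Δ
  | ned (h : gStr) {Rle Dom : Multiset (ℕ × ℕ)} {Γ Δ : LSeq} {a w : ℕ} :
      ¬ poccurs a Dom Γ Δ →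
      IDer cd gOld gStr gNew Rle ((a, w) ::ₘ Dom) Γ Δ →
      IDer cd gOld gStr gNew Rle Dom Γ Δ
  | cdr (h : gStr) (hcd : cd = true) {Rle Dom : Multiset (ℕ × ℕ)} {Γ Δ : LSeq}
      {v w a : ℕ} :
      IDer cd gOld gStr gNew ((v, w) ::ₘ Rle) ((a, w) ::ₘ (a, v) ::ₘ Dom) Γ Δ →
      IDer cd gOld gStr gNew ((v, w) ::ₘ Rle) ((a, w) ::ₘ Dom) Γ Δ
  | idN (h : gNew) {Rle Dom : Multiset (ℕ × ℕ)} {Γ Δ : LSeq} (w u P : ℕ)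
      (aus : List (ℕ × ℕ)) :
      (∀ p ∈ aus, CondD cd Rle p.2 w) →
      Cond4 Rle w u →
      IDer cd gOld gStr gNew Rle ((↑aus : Multiset (ℕ × ℕ)) + Dom)
        ((w, IFml.atom P (aus.map fun p => ITerm.param p.1)) ::ₘ Γ)
        ((u, IFml.atom P (aus.map fun p => ITerm.param p.1)) ::ₘ Δ)
  | prImp (h : gNew) {Rle Dom : Multiset (ℕ × ℕ)} {Γ Δ : LSeq} {w u : ℕ}
      {φ ψ : IFml} :
      Cond4 Rle w u →
      IDer cd gOld gStr gNew Rle Dom ((w, IFml.imp φ ψ) ::ₘ Γ) ((u, φ) ::ₘ Δ) →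
      IDer cd gOld gStr gNew Rle Dom ((w, IFml.imp φ ψ) ::ₘ (u, ψ) ::ₘ Γ) Δ →
      IDer cd gOld gStr gNew Rle Dom ((w, IFml.imp φ ψ) ::ₘ Γ) Δ
  | exr1 (h : gNew) {Rle Dom : Multiset (ℕ × ℕ)} {Γ Δ : LSeq} {w u a : ℕ}
      {φ : IFml} :
      CondD cd Rle u w →
      IDer cd gOld gStr gNew Rle ((a, u) ::ₘ Dom) Γ
        ((w, open0 φ a) ::ₘ (w, IFml.ex φ) ::ₘ Δ) →
      IDer cd gOld gStr gNew Rle ((a, u) ::ₘ Dom) Γ ((w, IFml.ex φ) ::ₘ Δ)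
  | exr2 (h : gNew) {Rle Dom : Multiset (ℕ × ℕ)} {Γ Δ : LSeq} {w u a : ℕ}
      {φ : IFml} :
      CondD cd Rle u w →
      ¬ poccurs a Dom Γ ((w, IFml.ex φ) ::ₘ Δ) →
      IDer cd gOld gStr gNew Rle ((a, u) ::ₘ Dom) Γ
        ((w, open0 φ a) ::ₘ (w, IFml.ex φ) ::ₘ Δ) →
      IDer cd gOld gStr gNew Rle Dom Γ ((w, IFml.ex φ) ::ₘ Δ)
  | alll1 (h : gNew) {Rle Dom : Multiset (ℕ × ℕ)} {Γ Δ : LSeq} {w u v a : ℕ}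
      {φ : IFml} :
      CondD cd Rle u v → Cond4 Rle w v →
      IDer cd gOld gStr gNew Rle ((a, u) ::ₘ Dom)
        ((w, IFml.all φ) ::ₘ (v, open0 φ a) ::ₘ Γ) Δ →
      IDer cd gOld gStr gNew Rle ((a, u) ::ₘ Dom) ((w, IFml.all φ) ::ₘ Γ) Δ
  | alll2 (h : gNew) {Rle Dom : Multiset (ℕ × ℕ)} {Γ Δ : LSeq} {w u v a : ℕ}
      {φ : IFml} :
      CondD cd Rle u v → Cond4 Rle w v →
      ¬ poccurs a Dom ((w, IFml.all φ) ::ₘ Γ) Δ →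
      IDer cd gOld gStr gNew Rle ((a, u) ::ₘ Dom)
        ((w, IFml.all φ) ::ₘ (v, open0 φ a) ::ₘ Γ) Δ →
      IDer cd gOld gStr gNew Rle Dom ((w, IFml.all φ) ::ₘ Γ) Δ

/-- The label `v` occurs in a relational atom. -/
def LOcc (v : ℕ) (Rle : Multiset (ℕ × ℕ)) : Prop :=
  ∃ w u, (w, u) ∈ Rle ∧ (v = w ∨ v = u)

theorem LOcc.cons {v : ℕ} {R : Multiset (ℕ × ℕ)} (h : LOcc v R) (p : ℕ × ℕ) :
    LOcc v (p ::ₘ R) := by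
  obtain ⟨w, u, hm, hv⟩ := h
  exact ⟨w, u, Multiset.mem_cons_of_mem hm, hv⟩

theorem fresh_cons {v x y : ℕ} {R D : Multiset (ℕ × ℕ)} {Γ Δ : LSeq}
    (hx : LOcc x R) (hy : LOcc y R) (h : ¬ loccurs v R D Γ Δ) :
    ¬ loccurs v ((x, y) ::ₘ R) D Γ Δ := by
  rintro (⟨w, u, hm, hv⟩ | h')
  · rcases Multiset.mem_cons.1 hm with he | hm
    · obtain ⟨rfl, rfl⟩ := Prod.mk.inj he
      rcases hv with rfl | rfl
      · exact h (Or.inl hx)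
      · exact h (Or.inl hy)
    · exact h (Or.inl ⟨w, u, hm, hv⟩)
  · exact h (Or.inr h')

/-- Weakening by a relational atom both of whose labels already occur in
relational atoms (so no renaming of eigenvariables is required). -/
theorem weaken_rel {cd : Bool} {R D : Multiset (ℕ × ℕ)} {Γ Δ : LSeq}
    (hd : IDer cd True True False R D Γ Δ) (x y : ℕ) (hx : LOcc x R) (hy : LOcc y R) :
    IDer cd True True False ((x, y) ::ₘ R) D Γ Δ := by
  induction hd with
  | botl => exact .botl _ _ _ _ _
  | andl _ ih => exact .andl (ih hx hy)
  | andr _ _ ih1 ih2 => exact .andr (ih1 hx hy) (ih2 hx hy)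
  | orl _ _ ih1 ih2 => exact .orl (ih1 hx hy) (ih2 hx hy)
  | orr _ ih => exact .orr (ih hx hy)
  | impr hf _ ih =>
    refine .impr (fresh_cons hx hy hf) ?_
    rw [Multiset.cons_swap]
    exact ih (hx.cons _) (hy.cons _)
  | exl hf _ ih => exact .exl hf (ih hx hy)
  | allr hf hg _ ih =>
    refine .allr (fresh_cons hx hy hf) hg ?_
    rw [Multiset.cons_swap]
    exact ih (hx.cons _) (hy.cons _)
  | id h w u P as =>
    rw [Multiset.cons_swap]
    exact .id h w u P as
  | impl h _ _ ih1 ih2 =>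
    have h1 := ih1 hx hy
    have h2 := ih2 hx hy
    rw [Multiset.cons_swap] at h1 h2 ⊢
    exact .impl h h1 h2
  | exr h _ ih => exact .exr h (ih hx hy)
  | alll h _ ih =>
    have h1 := ih hx hy
    rw [Multiset.cons_swap] at h1 ⊢
    exact .alll h h1
  | ref h _ ih =>
    have h1 := ih (hx.cons _) (hy.cons _)
    rw [Multiset.cons_swap] at h1
    exact .ref h h1
  | @tra h R D Γ Δ w u v _ ih =>
    have e : ∀ S : Multiset (ℕ × ℕ), (x, y) ::ₘ (w, u) ::ₘ (u, v) ::ₘ S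
        = (w, u) ::ₘ (u, v) ::ₘ (x, y) ::ₘ S := fun S => by
      rw [Multiset.cons_swap (x, y), Multiset.cons_swap (x, y)]
    have e2 : (w, u) ::ₘ (u, v) ::ₘ (w, v) ::ₘ R = (w, v) ::ₘ (w, u) ::ₘ (u, v) ::ₘ R := by
      rw [Multiset.cons_swap (u, v), Multiset.cons_swap (w, u)]
    have h1 := ih (by rw [e2]; exact hx.cons _) (by rw [e2]; exact hy.cons _)
    rw [e, Multiset.cons_swap (x, y)] at h1
    rw [e]
    exact .tra h h1
  | nd h _ ih =>
    have h1 := ih hx hy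
    rw [Multiset.cons_swap] at h1 ⊢
    exact .nd h h1
  | ned h hf _ ih => exact .ned h hf (ih hx hy)
  | cdr h hcd _ ih =>
    have h1 := ih hx hy
    rw [Multiset.cons_swap] at h1 ⊢
    exact .cdr h hcd h1
  | idN h => exact h.elim
  | prImp h => exact h.elim
  | exr1 h => exact h.elim
  | exr2 h => exact h.elim
  | alll1 h => exact h.elim
  | alll2 h => exact h.elim

/-- Every string in `L_{S4}(a)` consists of `a`s only. -/
theorem langS4_all {s : List Bool} (h : LangB S4sys true s) : ∀ c ∈ s, c = true := by
  unfold LangB at h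
  induction h with
  | refl => simp
  | tail _ hs ih =>
    obtain ⟨u, v, x, r, hP, rfl, rfl⟩ := hs
    have hx : x = true := ih x (by simp)
    subst hx
    intro c hc
    simp only [List.mem_append] at hc
    rcases hc with (hc | hc) | hc
    · exact ih c (by simp [hc])
    · simp only [S4sys, Set.mem_insert_iff, Set.mem_singleton_iff, Prod.mk.injEq] at hP
      rcases hP with ⟨_, rfl⟩ | ⟨_, rfl⟩ | ⟨h, _⟩ | ⟨h, _⟩
      · simp at hc
      · simpa using hc
      · simp at h
      · simp at h
    · exact ih c (by simp [hc])

theorem delete_along_path {cd : Bool} {R D : Multiset (ℕ × ℕ)} {Γ Δ : LSeq} {w u : ℕ}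
    {s : List Bool} (hp : BPath R w u s) (hs : ∀ c ∈ s, c = true)
    (hd : IDer cd True True False ((w, u) ::ₘ R) D Γ Δ) :
    IDer cd True True False R D Γ Δ := by
  induction hp with
  | nil w => exact .ref trivial hd
  | @cons w x u c s he _ ih =>
    have hc : c = true := hs c (by simp)
    subst hc
    have hm : (w, x) ∈ R := by simpa [IEdge] using he
    apply ih (fun c hc => hs c (by simp [hc]))
    have h1 := weaken_rel hd x u ⟨w, x, Multiset.mem_cons_of_mem hm, Or.inr rfl⟩
      ⟨w, u, Multiset.mem_cons_self _ _, Or.inr rfl⟩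
    obtain ⟨R', rfl⟩ := Multiset.exists_cons_of_mem hm
    rw [Multiset.cons_swap]
    refine .tra trivial ?_
    rw [Multiset.cons_swap (w, u), Multiset.cons_swap (x, u)] at h1
    exact h1

/-- Let `Λ := R, Γ ⊢ Δ`.  If `R, w ≤ u, Γ ⊢ Δ` is derivable
in `G3IntQ` (respectively `G3IntQC`, according to `cd`) and there is a
(possibly empty) propagation path `π(w,u)` in the propagation graph of `Λ` with
`s_π(w,u) ∈ L_{S4}(a)`, then `R, Γ ⊢ Δ` is derivable in `G3IntQ`
(respectively `G3IntQC`). -/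
theorem delete_relational_atom (cd : Bool) (Rle Dom : Multiset (ℕ × ℕ))
    (Γ Δ : LSeq) (w u : ℕ)
    (hd : IDer cd True True False ((w, u) ::ₘ Rle) Dom Γ Δ)
    (hp : Cond4 Rle w u) :
    IDer cd True True False Rle Dom Γ Δ := by
  obtain ⟨s, hpath, hl⟩ := hp
  exact delete_along_path hpath (langS4_all hl) hd

end IntFOL
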